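/- Assume G satisfies the Métivier condition. Let E ⊆ G be precisely monotone with ∂E ≠ G. Then either E = ∅, or E = G, or there exist a nonzero ν ∈ ℝ^{m+ℓ} and c ∈ ℝ such that, setting Ω = {x ∈ ℝ^{m+ℓ} : ⟨x,ν⟩ > c}, one has Ω ⊆ E ⊆ closure(Ω). -/

import Mathlib

/- Step-two Carnot group `G = Z × T` with `Z = ℝ^m`, `T = ℝ^ℓ` and group law
`(z,t)·(ζ,τ) = (z+ζ, t+τ+Q(z,ζ))` for a bilinear skew-symmetric `Q`. -/

noncomputable section

abbrev ZS (m : ℕ) := EuclideanSpace ℝ (Fin m)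

abbrev TS (l : ℕ) := EuclideanSpace ℝ (Fin l)

/-- Group law of the step-two group. -/
def gmul {m l : ℕ} (Q : ZS m →ₗ[ℝ] ZS m →ₗ[ℝ] TS l)
    (p q : ZS m × TS l) : ZS m × TS l :=
  (p.1 + q.1, p.2 + q.2 + Q p.1 q.1)

/-- Horizontal convexity. -/
def HConvex {m l : ℕ} (Q : ZS m →ₗ[ℝ] ZS m →ₗ[ℝ] TS l)
    (C : Set (ZS m × TS l)) : Prop :=
  ∀ p : ZS m × TS l, ∀ u : ZS m, p ∈ C → gmul Q p (u, 0) ∈ C →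
    ∀ s : ℝ, 0 ≤ s → s ≤ 1 → gmul Q p (s • u, 0) ∈ C


structure HM1 (A B : Set (ℝ × ℝ × ℝ)) : Prop where
  oA : IsOpen A
  oB : IsOpen B
  dj : Disjoint A B
  lA : ∀ x y t a b : ℝ, (x, y, t) ∉ A → (x, y, t) ∉ B →
    (x + a, y + b, t + (x * b - y * a)) ∈ A → ∀ r : ℝ, 0 < r →
      (x + r * a, y + r * b, t + r * (x * b - y * a)) ∈ A ∧
      (x - r * a, y - r * b, t - r * (x * b - y * a)) ∈ B
  lB : ∀ x y t a b : ℝ, (x, y, t) ∉ A → (x, y, t) ∉ B →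
    (x + a, y + b, t + (x * b - y * a)) ∈ B → ∀ r : ℝ, 0 < r →
      (x + r * a, y + r * b, t + r * (x * b - y * a)) ∈ B ∧
      (x - r * a, y - r * b, t - r * (x * b - y * a)) ∈ A

/-- The boundary set. -/
def Sg {X : Type*} (A B : Set X) : Set X := (A ∪ B)ᶜ

theorem mem_Sg {X : Type*} {A B : Set X} {x : X} : x ∈ Sg A B ↔ x ∉ A ∧ x ∉ B := by
  simp [Sg]

theorem mem3 {S : Set (ℝ × ℝ × ℝ)} {x y t x' y' t' : ℝ} (h : (x, y, t) ∈ S)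
    (hx : x' = x) (hy : y' = y) (ht : t' = t) : (x', y', t') ∈ S := by
  rw [hx, hy, ht]; exact h

namespace HM1
variable {A B : Set (ℝ × ℝ × ℝ)}

theorem symm (h : HM1 A B) : HM1 B A :=
  ⟨h.oB, h.oA, h.dj.symm, fun x y t a b h1 h2 => h.lB x y t a b h2 h1,
    fun x y t a b h1 h2 => h.lA x y t a b h2 h1⟩

theorem Sg_symm (A B : Set (ℝ × ℝ × ℝ)) : Sg A B = Sg B A := by
  simp [Sg, Set.union_comm]

theorem closedS (h : HM1 A B) : IsClosed (Sg A B) :=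
  (h.oA.union h.oB).isClosed_compl

theorem two_aux (h : HM1 A B) {x y t a b : ℝ} (h0 : (x, y, t) ∈ Sg A B)
    (h1 : (x + a, y + b, t + (x * b - y * a)) ∈ Sg A B) (r : ℝ) :
    (x + r * a, y + r * b, t + r * (x * b - y * a)) ∉ A := by
  intro hA
  rw [mem_Sg] at h0 h1
  have key := h.lA x y t (r * a) (r * b) h0.1 h0.2 (by convert hA using 3; ring)
  rcases lt_trichotomy r 0 with hr | hr | hr
  · have := (key (-1 / r) (div_pos_of_neg_of_neg (by norm_num) hr)).2
    apply h1.2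
    have e : -1 / r * r = -1 := by have := hr.ne; field_simp
    refine mem3 this ?_ ?_ ?_
    · linear_combination a * e
    · linear_combination b * e
    · linear_combination (x * b - y * a) * e
  · subst hr
    apply h0.1
    simpa using hA
  · have := (key (1 / r) (by positivity)).1
    apply h1.1
    convert this using 3 <;> field_simp

/-- A horizontal line meeting `S` twice is in `S`. -/
theorem two (h : HM1 A B) {x y t a b : ℝ} (h0 : (x, y, t) ∈ Sg A B)
    (h1 : (x + a, y + b, t + (x * b - y * a)) ∈ Sg A B) (r : ℝ) :
    (x + r * a, y + r * b, t + r * (x * b - y * a)) ∈ Sg A B := by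
  rw [mem_Sg]
  refine ⟨h.two_aux h0 h1 r, h.symm.two_aux ?_ ?_ r⟩
  · rwa [Sg_symm]
  · rwa [Sg_symm]

/-- Convenient form of `two`: two linked points. -/
theorem two' (h : HM1 A B) {x y t x' y' t' : ℝ} (h0 : (x, y, t) ∈ Sg A B)
    (h1 : (x', y', t') ∈ Sg A B) (hl : t' - t = x * y' - y * x') (r : ℝ) :
    (x + r * (x' - x), y + r * (y' - y), t + r * (t' - t)) ∈ Sg A B := by
  have := h.two (a := x' - x) (b := y' - y) h0 (by convert h1 using 3 <;> linarith) r
  refine mem3 this rfl rfl ?_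
  rw [hl]; ring

theorem exists_dir (h : HM1 A B) {x y t : ℝ} (h0 : (x, y, t) ∈ Sg A B) :
    ∃ a b : ℝ, (a, b) ≠ (0, 0) ∧ (x + a, y + b, t + (x * b - y * a)) ∈ Sg A B := by
  by_contra hcon
  push Not at hcon
  have hcont : Continuous fun p : ℝ × ℝ => (x + p.1, y + p.2, t + (x * p.2 - y * p.1)) := by
    fun_prop
  have hpre : IsPreconnected ({(0 : ℝ × ℝ)}ᶜ) :=
    (isConnected_compl_singleton_of_one_lt_rank (by
      rw [← Module.finrank_eq_rank]; simp) 0).isPreconnected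
  have hsub : ({(0 : ℝ × ℝ)}ᶜ) ⊆ (fun p : ℝ × ℝ => (x + p.1, y + p.2, t + (x * p.2 - y * p.1))) ⁻¹' A ∪
      (fun p : ℝ × ℝ => (x + p.1, y + p.2, t + (x * p.2 - y * p.1))) ⁻¹' B := by
    intro p hp
    have := hcon p.1 p.2 hp
    simpa [Sg, or_iff_not_imp_left] using this
  have hd : Disjoint ((fun p : ℝ × ℝ => (x + p.1, y + p.2, t + (x * p.2 - y * p.1))) ⁻¹' A)
      ((fun p : ℝ × ℝ => (x + p.1, y + p.2, t + (x * p.2 - y * p.1))) ⁻¹' B) := h.dj.preimage _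
  have h1 : ((1, 0) : ℝ × ℝ) ∈ ({(0 : ℝ × ℝ)}ᶜ : Set (ℝ × ℝ)) := by simp
  have h2 : ((-1, 0) : ℝ × ℝ) ∈ ({(0 : ℝ × ℝ)}ᶜ : Set (ℝ × ℝ)) := by simp
  rw [mem_Sg] at h0
  rcases hsub h1 with hA | hB
  · have hs := hpre.subset_left_of_subset_union (h.oA.preimage hcont) (h.oB.preimage hcont) hd hsub ⟨_, h1, hA⟩
    have a1 := (h.lA x y t 1 0 h0.1 h0.2 (by simpa using hA) 1 one_pos).2
    have a2 := hs h2
    exact Set.disjoint_left.1 h.dj a2 (by convert a1 using 3 <;> ring)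
  · have hs := hpre.subset_right_of_subset_union (h.oA.preimage hcont) (h.oB.preimage hcont) hd hsub ⟨_, h1, hB⟩
    have a1 := (h.lB x y t 1 0 h0.1 h0.2 (by simpa using hB) 1 one_pos).2
    have a2 := hs h2
    exact Set.disjoint_right.1 h.dj a2 (by convert a1 using 3 <;> ring)

theorem dense_arg {S : Set (ℝ × ℝ × ℝ)} (hS : IsClosed S) {F : ℝ → ℝ × ℝ × ℝ}
    (hF : Continuous F) (s : Set ℝ) (hs : s.Finite) (hm : ∀ t, t ∉ s → F t ∈ S) (t : ℝ) :
    F t ∈ S := by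
  have hd : Dense (sᶜ : Set ℝ) := hs.countable.dense_compl ℝ
  have hc : IsClosed (F ⁻¹' S) := hS.preimage hF
  have : sᶜ ⊆ F ⁻¹' S := hm
  have h3 := closure_minimal this hc
  rw [hd.closure_eq] at h3
  exact h3 (Set.mem_univ t)

theorem fill_M (h : HM1 A B) (k a : ℝ) (ha : a ≠ 0) (hL2 : ∀ r : ℝ, (0, r, 0) ∈ Sg A B)
    (hL3 : ∀ r : ℝ, (1 - k * r, r, r) ∈ Sg A B) (t : ℝ) :
    ((1 - k * t) / a, (2 - a) * t, t) ∈ Sg A B := by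
  refine dense_arg (F := fun t => ((1 - k * t) / a, (2 - a) * t, t)) h.closedS (by fun_prop)
    {1 / k, -1 / ((a - 1) * k)} (by simp) ?_ t
  clear t
  intro t ht
  have e1 : 1 - k * t ≠ 0 := by
    intro h0
    apply ht
    have hk : k ≠ 0 := by rintro rfl; simp at h0
    left; field_simp; linarith
  have e2 : 1 + (a - 1) * k * t ≠ 0 := by
    intro h0
    apply ht
    have hk : (a - 1) * k ≠ 0 := by intro h; rw [h] at h0; simp at h0
    right
    rw [Set.mem_singleton_iff, eq_div_iff hk]; linarith
  obtain ⟨c, hc⟩ : ∃ c, c = 1 - k * t := ⟨_, rfl⟩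
  obtain ⟨D, hD⟩ : ∃ D, D = 1 + (a - 1) * k * t := ⟨_, rfl⟩
  have hkt : k * t = 1 - c := by linarith
  have hD' : D = 1 + (a - 1) * (1 - c) := by rw [hD, mul_assoc, hkt]
  rw [← hc] at e1
  rw [← hD] at e2
  have q := h.two' (hL2 (- a * t / c)) (hL3 (a / D * t))
    (by
      have : k * (a / D * t) = a / D * (1 - c) := by rw [← hkt]; ring
      rw [this]; field_simp; rw [hD']; ring) (D / a)
  have e3 : k * (a / D * t) = a / D * (1 - c) := by rw [← hkt]; ring
  rw [e3] at q
  refine mem3 q ?_ ?_ ?_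
  · rw [← hc]; field_simp; rw [hD']; ring
  · field_simp; rw [hD']; ring
  · field_simp; ring

theorem fill (h : HM1 A B) (k : ℝ) (hL2 : ∀ r : ℝ, (0, r, 0) ∈ Sg A B)
    (hL3 : ∀ r : ℝ, (1 - k * r, r, r) ∈ Sg A B) (X Y T : ℝ) :
    (X, Y, T) ∈ Sg A B := by
  refine dense_arg (F := fun X => (X, Y, T)) h.closedS (by fun_prop)
    {4 / 3 * (1 / 2 - k * Y), 4 / 3 * (3 / 2 - k * Y)} (by simp) ?_ X
  clear X
  intro X hX
  obtain ⟨θ, hθ⟩ : ∃ θ : ℝ, θ = 3 / 4 * X - 1 / 2 + k * Y := ⟨_, rfl⟩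
  have h0 : θ ≠ 0 := by
    intro h0; apply hX; left; linarith
  have h1 : 1 - θ ≠ 0 := by
    intro h0; apply hX; right; rw [Set.mem_singleton_iff]; linarith
  have p1 := h.fill_M k (3 / 2) (by norm_num) hL2 hL3 ((3 * T / 2 - Y) / (1 - θ))
  have p2 := h.fill_M k (1 / 2) (by norm_num) hL2 hL3 ((Y - T / 2) / θ)
  have q := h.two' p1 p2 (by ring) θ
  have hX' : X = 4 / 3 * (θ + 1 / 2 - k * Y) := by linarith
  convert q using 3
  · rw [hX']; field_simp; ring
  · field_simp; ring
  · field_simp; ring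

/-- Affine automorphism-like map. -/
def Psi (x0 y0 t0 a b c d : ℝ) (p : ℝ × ℝ × ℝ) : ℝ × ℝ × ℝ :=
  (x0 + p.1 * a + p.2.1 * c, y0 + p.1 * b + p.2.1 * d,
    t0 + p.2.2 * (a * d - b * c) + p.1 * (x0 * b - y0 * a) + p.2.1 * (x0 * d - y0 * c))

theorem pull (h : HM1 A B) (x0 y0 t0 a b c d : ℝ) :
    HM1 (Psi x0 y0 t0 a b c d ⁻¹' A) (Psi x0 y0 t0 a b c d ⁻¹' B) := by
  have hc : Continuous (Psi x0 y0 t0 a b c d) := by unfold Psi; fun_prop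
  refine ⟨h.oA.preimage hc, h.oB.preimage hc, h.dj.preimage _, ?_, ?_⟩
  · intro x y t u v hA hB hu r hr
    have q := h.lA _ _ _ (u * a + v * c) (u * b + v * d) hA hB
      (by rw [Set.mem_preimage] at hu; unfold Psi at hu; refine mem3 hu ?_ ?_ ?_ <;> ring) r hr
    simp only [Set.mem_preimage, Psi]
    refine ⟨?_, ?_⟩
    · refine mem3 q.1 ?_ ?_ ?_ <;> ring
    · refine mem3 q.2 ?_ ?_ ?_ <;> ring
  · intro x y t u v hA hB hu r hr
    have q := h.lB _ _ _ (u * a + v * c) (u * b + v * d) hA hB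
      (by rw [Set.mem_preimage] at hu; unfold Psi at hu; refine mem3 hu ?_ ?_ ?_ <;> ring) r hr
    simp only [Set.mem_preimage, Psi]
    refine ⟨?_, ?_⟩
    · refine mem3 q.1 ?_ ?_ ?_ <;> ring
    · refine mem3 q.2 ?_ ?_ ?_ <;> ring

theorem Psi_surj (x0 y0 t0 a b c d : ℝ) (hD : a * d - b * c ≠ 0) :
    Function.Surjective (Psi x0 y0 t0 a b c d) := by
  rintro ⟨X, Y, T⟩
  refine ⟨(((X - x0) * d - (Y - y0) * c) / (a * d - b * c),
    (a * (Y - y0) - b * (X - x0)) / (a * d - b * c),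
    (T - t0 - ((X - x0) * d - (Y - y0) * c) / (a * d - b * c) * (x0 * b - y0 * a)
      - (a * (Y - y0) - b * (X - x0)) / (a * d - b * c) * (x0 * d - y0 * c)) / (a * d - b * c)), ?_⟩
  simp only [Psi, Prod.mk.injEq]
  refine ⟨?_, ?_, ?_⟩
  · have e := mul_inv_cancel₀ hD
    rw [div_eq_mul_inv, div_eq_mul_inv]
    linear_combination (X - x0) * e
  · have e := mul_inv_cancel₀ hD
    rw [div_eq_mul_inv, div_eq_mul_inv]
    linear_combination (Y - y0) * e
  · rw [div_mul_cancel₀ _ hD]; ring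

theorem convex_of_pull (x0 y0 t0 a b c d : ℝ) (hD : a * d - b * c ≠ 0)
    (hc : Convex ℝ (Psi x0 y0 t0 a b c d ⁻¹' A)) : Convex ℝ A := by
  intro p hp q hq α β hα hβ hs
  obtain ⟨p', rfl⟩ := Psi_surj x0 y0 t0 a b c d hD p
  obtain ⟨q', rfl⟩ := Psi_surj x0 y0 t0 a b c d hD q
  have := hc (x := p') hp (y := q') hq hα hβ hs
  rw [Set.mem_preimage] at this
  convert this using 1
  obtain rfl : α = 1 - β := by linarith
  simp only [Psi, Prod.smul_mk, Prod.mk_add_mk, smul_eq_mul, Prod.fst_add, Prod.snd_add,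
    Prod.smul_fst, Prod.smul_snd, Prod.mk.injEq]
  refine ⟨by ring, by ring, by ring⟩

theorem fill2 (h : HM1 A B) (hL1 : ∀ r : ℝ, (r, 0, 0) ∈ Sg A B)
    (hL2 : ∀ r : ℝ, (0, r, 0) ∈ Sg A B) {x y t : ℝ} (hy : y ≠ 0) (ht : t ≠ 0)
    (hq : (x, y, t) ∈ Sg A B) (P : ℝ × ℝ × ℝ) : P ∈ Sg A B := by
  have hs : t / y ≠ 0 := div_ne_zero ht hy
  have h' := h.pull 0 0 0 (t / y) 0 0 1
  obtain ⟨P, rfl⟩ := Psi_surj 0 0 0 (t / y) 0 0 1 (by simpa using hs) P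
  have := h'.fill (-((x - t / y) / y) / (t / y)) (fun r => ?_) (fun r => ?_) P.1 P.2.1 P.2.2
  · exact this
  · change Psi _ _ _ _ _ _ _ _ ∈ Sg A B
    convert hL2 r using 1
    simp [Psi]
  · change Psi _ _ _ _ _ _ _ _ ∈ Sg A B
    have q := h.two' (hL1 (t / y)) hq (by field_simp; ring) (r / y)
    convert q using 1
    simp only [Psi, Prod.mk.injEq]
    refine ⟨?_, ?_, ?_⟩
    · field_simp; ring
    · field_simp; ring
    · field_simp; ring

/-- If `S ⊆ {g = 0}` for a linear `g`, then conclude. -/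
theorem conv_of_linear (h : HM1 A B) (g : (ℝ × ℝ × ℝ) →ₗ[ℝ] ℝ) (w : ℝ × ℝ × ℝ) (hw : g w = 1)
    (hS : ∀ p ∈ Sg A B, g p = 0) {x y t a b : ℝ} (h0 : (x, y, t) ∈ Sg A B)
    (h1 : g (x + a, y + b, t + (x * b - y * a)) = 1)
    (h2 : g (x - a, y - b, t - (x * b - y * a)) = -1) : Convex ℝ A := by
  have gc : Continuous g := g.continuous_of_finiteDimensional
  have hlin : IsLinearMap ℝ g := g.isLinear
  have cp : Convex ℝ {p | 0 < g p} := convex_halfSpace_gt hlin 0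
  have cn : Convex ℝ {p | g p < 0} := convex_halfSpace_lt hlin 0
  have sp : {p | 0 < g p} ⊆ A ∪ B := by
    intro p hp
    by_contra hc
    exact (ne_of_gt hp) (hS p hc)
  have sn : {p | g p < 0} ⊆ A ∪ B := by
    intro p hp
    by_contra hc
    exact (ne_of_lt hp) (hS p hc)
  have m1 : (x + a, y + b, t + (x * b - y * a)) ∈ {p | 0 < g p} := by
    rw [Set.mem_ofPred_eq, h1]; norm_num
  have m2 : (x - a, y - b, t - (x * b - y * a)) ∈ {p | g p < 0} := by
    rw [Set.mem_ofPred_eq, h2]; norm_num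
  rw [mem_Sg] at h0
  rcases sp m1 with hA | hB
  · have i1 := cp.isPreconnected.subset_left_of_subset_union h.oA h.oB h.dj sp ⟨_, m1, hA⟩
    have k := (h.lA x y t a b h0.1 h0.2 hA 1 one_pos).2
    simp only [one_mul] at k
    have i2 := cn.isPreconnected.subset_right_of_subset_union h.oA h.oB h.dj sn ⟨_, m2, k⟩
    have : A = {p | 0 < g p} := by
      refine Set.Subset.antisymm (fun p hp => ?_) i1
      by_contra hn
      have hn : g p ≤ 0 := not_lt.1 hn
      have hcc : Continuous fun e : ℝ => p - e • w := by fun_prop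
      have hnb : (fun e : ℝ => p - e • w) ⁻¹' A ∈ nhds (0 : ℝ) :=
        (h.oA.preimage hcc).mem_nhds (by simpa using hp)
      obtain ⟨ε, hε, hb⟩ := Metric.mem_nhds_iff.1 hnb
      have : (ε / 2) ∈ Metric.ball (0 : ℝ) ε := by
        rw [Metric.mem_ball, dist_zero_right, Real.norm_eq_abs, abs_of_pos (by positivity)]; linarith
      have q1 := hb this
      have q2 : p - (ε / 2) • w ∈ B := i2 (by
        rw [Set.mem_ofPred_eq, map_sub, map_smul, hw, smul_eq_mul]; linarith)
      exact Set.disjoint_left.1 h.dj q1 q2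
    rw [this]; exact cp
  · have i1 := cp.isPreconnected.subset_right_of_subset_union h.oA h.oB h.dj sp ⟨_, m1, hB⟩
    have k := (h.lB x y t a b h0.1 h0.2 hB 1 one_pos).2
    simp only [one_mul] at k
    have i2 := cn.isPreconnected.subset_left_of_subset_union h.oA h.oB h.dj sn ⟨_, m2, k⟩
    have : A = {p | g p < 0} := by
      refine Set.Subset.antisymm (fun p hp => ?_) i2
      by_contra hn
      have hn : 0 ≤ g p := not_lt.1 hn
      have hcc : Continuous fun e : ℝ => p + e • w := by fun_prop
      have hnb : (fun e : ℝ => p + e • w) ⁻¹' A ∈ nhds (0 : ℝ) :=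
        (h.oA.preimage hcc).mem_nhds (by simpa using hp)
      obtain ⟨ε, hε, hb⟩ := Metric.mem_nhds_iff.1 hnb
      have : (ε / 2) ∈ Metric.ball (0 : ℝ) ε := by
        rw [Metric.mem_ball, dist_zero_right, Real.norm_eq_abs, abs_of_pos (by positivity)]; linarith
      have q1 := hb this
      have q2 : p + (ε / 2) • w ∈ B := i1 (by
        rw [Set.mem_ofPred_eq, map_add, map_smul, hw, smul_eq_mul]; linarith)
      exact Set.disjoint_left.1 h.dj q1 q2
    rw [this]; exact cn

theorem main1 (h : HM1 A B) (hne : A.Nonempty) (hL1 : ∀ r : ℝ, (r, 0, 0) ∈ Sg A B)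
    (hL2 : ∀ r : ℝ, (0, r, 0) ∈ Sg A B) : Convex ℝ A := by
  obtain ⟨P, hP⟩ := hne
  have hyt : ∀ x y t : ℝ, y ≠ 0 → t ≠ 0 → (x, y, t) ∉ Sg A B := fun x y t hy ht hq =>
    (mem_Sg.1 (h.fill2 hL1 hL2 hy ht hq P)).1 hP
  have hxt : ∀ x t : ℝ, x ≠ 0 → t ≠ 0 → (x, 0, t) ∉ Sg A B := by
    intro x t hx ht hq
    have q := h.two' hq (hL2 (- t / x)) (by field_simp; ring) (1 / 2)
    refine hyt _ _ _ ?_ ?_ q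
    · have : t / x ≠ 0 := div_ne_zero ht hx
      intro h0; apply this; linear_combination -2 * h0
    · intro h0; apply ht; linarith
  have hS : ∀ p ∈ Sg A B, p.2.2 = 0 := by
    rintro ⟨x, y, t⟩ hp
    by_contra ht
    change t ≠ 0 at ht
    by_cases hy : y = 0
    · subst hy
      by_cases hx : x = 0
      · subst hx
        obtain ⟨a, b, hab, hq⟩ := h.exists_dir hp
        simp only [zero_add, zero_mul, sub_zero, add_zero] at hq
        by_cases hb : b = 0
        · subst hb
          exact hxt a t (by rintro rfl; exact hab rfl) ht hq
        · exact hyt _ _ _ hb ht hq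
      · exact hxt x t hx ht hp
    · exact hyt x y t hy ht hp
  exact h.conv_of_linear ((LinearMap.snd ℝ ℝ ℝ).comp (LinearMap.snd ℝ ℝ (ℝ × ℝ))) (0, 0, 1) (by simp)
    hS (hL1 1) (a := 0) (b := 1) (by simp) (by simp)

theorem main0 (h : HM1 A B) (hne : A.Nonempty) (hL1 : ∀ r : ℝ, (r, 0, 0) ∈ Sg A B) :
    Convex ℝ A := by
  by_cases hS : ∀ p ∈ Sg A B, p.2.1 = 0
  · exact h.conv_of_linear ((LinearMap.fst ℝ ℝ ℝ).comp (LinearMap.snd ℝ ℝ (ℝ × ℝ))) (0, 1, 0) (by simp)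
      hS (hL1 0) (a := 0) (b := 1) (by simp) (by simp)
  · push Not at hS
    obtain ⟨⟨x, y, t⟩, hq, hy⟩ := hS
    change y ≠ 0 at hy
    have hD : (1 : ℝ) * y - 0 * (x - t / y) ≠ 0 := by simpa using hy
    have h' := h.pull (t / y) 0 0 1 0 (x - t / y) y
    apply convex_of_pull (t / y) 0 0 1 0 (x - t / y) y hD
    refine h'.main1 ?_ (fun r => ?_) (fun r => ?_)
    · obtain ⟨P, hP⟩ := hne
      obtain ⟨P, rfl⟩ := Psi_surj (t / y) 0 0 1 0 (x - t / y) y hD P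
      exact ⟨P, hP⟩
    · change Psi _ _ _ _ _ _ _ _ ∈ Sg A B
      convert hL1 (t / y + r) using 1
      simp [Psi]
    · change Psi _ _ _ _ _ _ _ _ ∈ Sg A B
      have q := h.two' (hL1 (t / y)) hq (by field_simp; ring) r
      convert q using 1
      simp only [Psi, Prod.mk.injEq]
      refine ⟨by ring, by ring, ?_⟩
      field_simp; ring

theorem convexA (h : HM1 A B) : Convex ℝ A := by
  rcases A.eq_empty_or_nonempty with rfl | hne
  · exact convex_empty
  rcases (Sg A B).eq_empty_or_nonempty with hS | ⟨⟨x, y, t⟩, hS⟩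
  · have hu : (Set.univ : Set (ℝ × ℝ × ℝ)) ⊆ A ∪ B := by
      intro p _
      by_contra hc
      have : p ∈ Sg A B := hc
      rw [hS] at this
      exact this
    obtain ⟨P, hP⟩ := hne
    have := isPreconnected_univ.subset_left_of_subset_union h.oA h.oB h.dj hu ⟨P, trivial, hP⟩
    rw [Set.univ_subset_iff.1 this]
    exact convex_univ
  · obtain ⟨a, b, hab, hq⟩ := h.exists_dir hS
    have hD : a * a - b * (-b) ≠ 0 := by
      intro h0
      apply hab
      have ha : a = 0 := by nlinarith [sq_nonneg a, sq_nonneg b]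
      have hb : b = 0 := by nlinarith [sq_nonneg a, sq_nonneg b]
      rw [ha, hb]
    have h' := h.pull x y t a b (-b) a
    apply convex_of_pull x y t a b (-b) a hD
    refine h'.main0 ?_ (fun r => ?_)
    · obtain ⟨P, hP⟩ := hne
      obtain ⟨P, rfl⟩ := Psi_surj x y t a b (-b) a hD P
      exact ⟨P, hP⟩
    · change Psi _ _ _ _ _ _ _ _ ∈ Sg A B
      convert h.two hS hq r using 1
      simp [Psi]

end HM1

section GPart

variable {m l : ℕ}

/-- Horizontal move. -/
def mv (Q : ZS m →ₗ[ℝ] ZS m →ₗ[ℝ] TS l) (p : ZS m × TS l) (u : ZS m) : ZS m × TS l :=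
  gmul Q p (u, 0)

theorem mv_eq (Q : ZS m →ₗ[ℝ] ZS m →ₗ[ℝ] TS l) (p : ZS m × TS l) (u : ZS m) :
    mv Q p u = (p.1 + u, p.2 + Q p.1 u) := by
  simp [mv, gmul]

theorem mv_zero (Q : ZS m →ₗ[ℝ] ZS m →ₗ[ℝ] TS l) (p : ZS m × TS l) : mv Q p 0 = p := by
  simp [mv_eq]

theorem skew_self {Q : ZS m →ₗ[ℝ] ZS m →ₗ[ℝ] TS l}
    (hskew : ∀ z ζ : ZS m, Q z ζ = - Q ζ z) (u : ZS m) : Q u u = 0 := by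
  have h1 := hskew u u
  have h2 : (2 : ℝ) • Q u u = 0 := by
    rw [two_smul]
    exact add_eq_zero_iff_eq_neg.2 h1
  exact (smul_eq_zero.1 h2).resolve_left two_ne_zero

theorem mv_mv {Q : ZS m →ₗ[ℝ] ZS m →ₗ[ℝ] TS l}
    (hskew : ∀ z ζ : ZS m, Q z ζ = - Q ζ z) (p : ZS m × TS l) (u : ZS m) (a b : ℝ) :
    mv Q (mv Q p (a • u)) (b • u) = mv Q p ((a + b) • u) := by
  simp only [mv_eq, map_add, LinearMap.add_apply, map_smul, LinearMap.smul_apply,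
    skew_self hskew, smul_zero, add_zero, add_smul, add_assoc]

theorem Q_cont (Q : ZS m →ₗ[ℝ] ZS m →ₗ[ℝ] TS l) :
    Continuous fun x : ZS m × ZS m => Q x.1 x.2 := by
  have : Continuous fun x : ZS m × ZS m => Q.toContinuousBilinearMap x.1 x.2 := by fun_prop
  exact this

theorem mv_cont (Q : ZS m →ₗ[ℝ] ZS m →ₗ[ℝ] TS l) :
    Continuous fun x : (ZS m × TS l) × ZS m => mv Q x.1 x.2 := by
  simp only [mv_eq]
  have h : Continuous fun x : (ZS m × TS l) × ZS m => Q x.1.1 x.2 :=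
    (Q_cont Q).comp (f := fun x : (ZS m × TS l) × ZS m => (x.1.1, x.2)) (by fun_prop)
  have h1 : Continuous fun x : (ZS m × TS l) × ZS m => x.1.1 + x.2 := by fun_prop
  have h2 : Continuous fun x : (ZS m × TS l) × ZS m => x.1.2 := by fun_prop
  exact h1.prodMk (h2.add h)

theorem open_step {Q : ZS m →ₗ[ℝ] ZS m →ₗ[ℝ] TS l}
    (hskew : ∀ z ζ : ZS m, Q z ζ = - Q ζ z)
    (hMet : ∀ z : ZS m, z ≠ 0 → Function.Surjective fun ζ => Q z ζ)
    (p : ZS m × TS l) (u : ZS m) (hu : u ≠ 0) (α β : ℝ) (hαβ : α + β ≠ 0)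
    (C : Set (ZS m × TS l))
    (hC : ∀ᶠ x : ZS m × ZS m in nhds (α • u, β • u), mv Q (mv Q p x.1) x.2 ∈ C) :
    mv Q p ((α + β) • u) ∈ interior C := by
  set B := Q.toContinuousBilinearMap with hB
  have hBQ : ∀ x y, B x y = Q x y := fun _ _ => rfl
  let F : ZS m × ZS m → ZS m × TS l := fun x => (p.1 + x.1 + x.2, p.2 + B p.1 x.1 + B (p.1 + x.1) x.2)
  have hF : ∀ x, F x = mv Q (mv Q p x.1) x.2 := fun x => by simp [F, mv_eq, hBQ]
  have d1 : HasStrictFDerivAt (fun x : ZS m × ZS m => p.1 + x.1) (ContinuousLinearMap.fst ℝ (ZS m) (ZS m)) (α • u, β • u) :=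
    hasStrictFDerivAt_fst.const_add _
  have d2 : HasStrictFDerivAt (fun x : ZS m × ZS m => x.2) (ContinuousLinearMap.snd ℝ (ZS m) (ZS m)) (α • u, β • u) :=
    hasStrictFDerivAt_snd
  have d3 : HasStrictFDerivAt (fun x : ZS m × ZS m => p.2 + B p.1 x.1)
      ((B p.1).comp (ContinuousLinearMap.fst ℝ (ZS m) (ZS m))) (α • u, β • u) :=
    ((B p.1).comp (ContinuousLinearMap.fst ℝ (ZS m) (ZS m))).hasStrictFDerivAt.const_add _
  have d4 := (d1.add d2).prodMk (d3.add (B.hasStrictFDerivAt_of_bilinear d1 d2))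
  have d5 : HasStrictFDerivAt F _ (α • u, β • u) := d4
  have hsurj : LinearMap.range ((((ContinuousLinearMap.fst ℝ (ZS m) (ZS m)) + (ContinuousLinearMap.snd ℝ (ZS m) (ZS m))).prod
      ((B p.1).comp (ContinuousLinearMap.fst ℝ (ZS m) (ZS m)) +
        (B.precompR (ZS m × ZS m) (p.1 + α • u) (ContinuousLinearMap.snd ℝ (ZS m) (ZS m)) +
          B.precompL (ZS m × ZS m) (ContinuousLinearMap.fst ℝ (ZS m) (ZS m)) (β • u)))) : ZS m × ZS m →ₗ[ℝ] ZS m × TS l) = ⊤ := by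
    rw [LinearMap.range_eq_top]
    rintro ⟨a, b⟩
    obtain ⟨v, hv⟩ := hMet u hu ((-(α + β))⁻¹ • (b - Q p.1 a - α • Q u a))
    have hv : Q u v = _ := hv
    refine ⟨(v, a - v), ?_⟩
    have h2 : -(α + β) ≠ 0 := neg_ne_zero.2 hαβ
    have h3 : (-(α + β)) • Q u v = b - Q p.1 a - α • Q u a := by
      rw [hv, smul_inv_smul₀ h2]
    have h4 : b = (-(α + β)) • Q u v + Q p.1 a + α • Q u a := by rw [h3]; abel
    simp only [ContinuousLinearMap.coe_coe, ContinuousLinearMap.prod_apply, ContinuousLinearMap.add_apply,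
      ContinuousLinearMap.comp_apply, ContinuousLinearMap.coe_fst', ContinuousLinearMap.coe_snd',
      ContinuousLinearMap.precompR_apply, ContinuousLinearMap.precompL_apply, hBQ, Prod.mk.injEq]
    refine ⟨by abel, ?_⟩
    rw [h4]
    have k1 : Q (p.1 + α • u) (a - v) = Q p.1 a - Q p.1 v + (α • Q u a - α • Q u v) := by
      rw [map_add, map_smul, LinearMap.add_apply, LinearMap.smul_apply, map_sub, map_sub, smul_sub]
    have k2 : Q v (β • u) = -(β • Q u v) := by
      rw [map_smul, hskew v u, smul_neg]
    change Q p.1 v + (Q (p.1 + α • u) (a - v) + Q v (β • u)) = _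
    rw [k1, k2]
    module
  have key := d5.map_nhds_eq_of_surj hsurj
  have hm : C ∈ Filter.map F (nhds (α • u, β • u)) := by
    rw [Filter.mem_map]
    filter_upwards [hC] with x hx
    rw [Set.mem_preimage, hF]; exact hx
  rw [key, hF] at hm
  rw [← mv_mv hskew]
  exact mem_interior_iff_mem_nhds.2 hm

theorem ev_mv (Q : ZS m →ₗ[ℝ] ZS m →ₗ[ℝ] TS l) {C : Set (ZS m × TS l)}
    {f : ZS m × ZS m → ZS m × TS l} {g : ZS m × ZS m → ZS m} (hf : Continuous f)
    (hg : Continuous g) (x : ZS m × ZS m) (h : mv Q (f x) (g x) ∈ interior C) :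
    ∀ᶠ y in nhds x, mv Q (f y) (g y) ∈ C := by
  have hc : Continuous fun y => mv Q (f y) (g y) := (mv_cont Q).comp (hf.prodMk hg)
  have := hc.continuousAt.eventually (isOpen_interior.mem_nhds h)
  filter_upwards [this] with y hy using interior_subset hy

theorem F1 {Q : ZS m →ₗ[ℝ] ZS m →ₗ[ℝ] TS l}
    (hskew : ∀ z ζ : ZS m, Q z ζ = - Q ζ z)
    (hMet : ∀ z : ZS m, z ≠ 0 → Function.Surjective fun ζ => Q z ζ)
    {E : Set (ZS m × TS l)} (hE : HConvex Q E) {y : ZS m × TS l} {u : ZS m}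
    (hy : y ∈ E) (hx : mv Q y u ∈ interior E) (s : ℝ) (h0 : 0 < s) (h1 : s < 1) :
    mv Q y (s • u) ∈ interior E := by
  by_cases hu : u = 0
  · subst hu; simpa using hx
  have hs : s = s / 2 + s / 2 := by ring
  rw [hs]
  apply open_step hskew hMet y u hu _ _ (by linarith)
  have c1 : Continuous fun x : ZS m × ZS m => mv Q y x.1 :=
    (mv_cont Q).comp (f := fun x : ZS m × ZS m => (y, x.1)) (by fun_prop)
  have hs2 : 1 - s / 2 ≠ 0 := by intro h; linarith
  have e1 := ev_mv Q (C := E) (f := fun _ => y) (g := fun x => (2 / s) • x.1) (by fun_prop) (by fun_prop)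
    ((s / 2) • u, (s / 2) • u) (by
      simp only [smul_smul]
      rw [show 2 / s * (s / 2) = 1 by field_simp, one_smul]; exact hx)
  have e2 := ev_mv Q (C := E) (f := fun x => mv Q y x.1) (g := fun x => ((1 - s / 2) / (s / 2)) • x.2) c1 (by fun_prop)
    ((s / 2) • u, (s / 2) • u) (by
      simp only [smul_smul]
      rw [mv_mv hskew, show s / 2 + (1 - s / 2) / (s / 2) * (s / 2) = 1 by field_simp; ring, one_smul]; exact hx)
  filter_upwards [e1, e2] with x hx1 hx2
  have k1 : mv Q y x.1 ∈ E := by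
    have := hE y _ hy hx1 (s / 2) (by linarith) (by linarith)
    rw [smul_smul, show s / 2 * (2 / s) = 1 by field_simp, one_smul] at this
    exact this
  have := hE _ _ k1 hx2 ((s / 2) / (1 - s / 2)) (div_nonneg (by linarith) (by linarith))
    (by rw [div_le_one (by linarith)]; linarith)
  rw [smul_smul, show s / 2 / (1 - s / 2) * ((1 - s / 2) / (s / 2)) = 1 by
    rw [div_mul_div_comm, mul_comm, div_self]; exact mul_ne_zero hs2 (by linarith), one_smul] at this
  exact this

theorem back {Q : ZS m →ₗ[ℝ] ZS m →ₗ[ℝ] TS l}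
    (hskew : ∀ z ζ : ZS m, Q z ζ = - Q ζ z)
    {E : Set (ZS m × TS l)} (hE : HConvex Q E) {y : ZS m × TS l} {v : ZS m} (ρ : ℝ) (hρ : 0 < ρ)
    (hy : y ∉ E) (hx : mv Q y (-ρ • v) ∈ E) : mv Q y v ∉ E := by
  intro hv
  apply hy
  have e : mv Q (mv Q y v) ((-(1 + ρ)) • v) = mv Q y (-ρ • v) := by
    have := mv_mv hskew y v 1 (-(1 + ρ))
    rw [one_smul] at this
    rw [this]; congr 2; ring
  have := hE (mv Q y v) ((-(1 + ρ)) • v) hv (by change mv Q _ _ ∈ E; rw [e]; exact hx) (1 / (1 + ρ)) (by positivity)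
    (by rw [div_le_one (by linarith)]; linarith)
  rw [smul_smul, show 1 / (1 + ρ) * (-(1 + ρ)) = -1 by field_simp] at this
  have e2 := mv_mv hskew y v 1 (-1)
  rw [one_smul] at e2
  change mv Q _ _ ∈ E at this
  rw [e2] at this
  simpa [mv_zero] using this

theorem F2 {Q : ZS m →ₗ[ℝ] ZS m →ₗ[ℝ] TS l}
    (hskew : ∀ z ζ : ZS m, Q z ζ = - Q ζ z)
    (hMet : ∀ z : ZS m, z ≠ 0 → Function.Surjective fun ζ => Q z ζ)
    {E : Set (ZS m × TS l)} (hE : HConvex Q E) {y : ZS m × TS l} {u : ZS m}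
    (hy : y ∉ E) (hx : mv Q y u ∈ interior E) (s : ℝ) (h0 : 0 < s) :
    mv Q y (-s • u) ∈ interior Eᶜ := by
  by_cases hu : u = 0
  · subst hu; rw [mv_zero] at hx; exact absurd (interior_subset hx) hy
  have hs : -s = -s / 2 + -s / 2 := by ring
  rw [hs]
  apply open_step hskew hMet y u hu _ _ (by linarith)
  have c1 : Continuous fun x : ZS m × ZS m => mv Q y x.1 :=
    (mv_cont Q).comp (f := fun x : ZS m × ZS m => (y, x.1)) (by fun_prop)
  have e1 := ev_mv Q (C := E) (f := fun _ => y) (g := fun x => (-(2 / s)) • x.1) (by fun_prop) (by fun_prop)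
    ((-s / 2) • u, (-s / 2) • u) (by
      simp only [smul_smul]
      rw [show -(2 / s) * (-s / 2) = 1 by field_simp, one_smul]; exact hx)
  have e2 := ev_mv Q (C := E) (f := fun x => mv Q y x.1) (g := fun x => (-(1 + 2 / s)) • x.2) c1 (by fun_prop)
    ((-s / 2) • u, (-s / 2) • u) (by
      simp only [smul_smul]
      rw [mv_mv hskew, show -s / 2 + -(1 + 2 / s) * (-s / 2) = 1 by field_simp; ring, one_smul]; exact hx)
  filter_upwards [e1, e2] with x hx1 hx2
  have k1 : mv Q y x.1 ∉ E := back hskew hE (2 / s) (by positivity) hy hx1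
  exact back hskew hE (1 + 2 / s) (by positivity) k1 hx2

theorem line_prop {Q : ZS m →ₗ[ℝ] ZS m →ₗ[ℝ] TS l}
    (hskew : ∀ z ζ : ZS m, Q z ζ = - Q ζ z)
    (hMet : ∀ z : ZS m, z ≠ 0 → Function.Surjective fun ζ => Q z ζ)
    {E : Set (ZS m × TS l)} (hE : HConvex Q E) (hE' : HConvex Q Eᶜ) {p : ZS m × TS l} {u : ZS m}
    (hpA : p ∉ interior E) (hpB : p ∉ interior Eᶜ) (hx : mv Q p u ∈ interior E) (r : ℝ) (hr : 0 < r) :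
    mv Q p (r • u) ∈ interior E ∧ mv Q p (-r • u) ∈ interior Eᶜ := by
  -- moving base point
  have base : ∀ a b : ℝ, mv Q (mv Q p (a • u)) ((b - a) • u) = mv Q p (b • u) := by
    intro a b; rw [mv_mv hskew]; congr 2; ring
  have hx1 : mv Q p ((1 : ℝ) • u) ∈ interior E := by rwa [one_smul]
  have c3 : ∀ r : ℝ, 0 < r → mv Q p (-r • u) ∉ E := by
    intro r hr hc
    apply hpA
    have := F1 hskew hMet hE (u := (1 - -r) • u) hc (by rw [base]; exact hx1) (r / (1 + r)) (by positivity)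
      (by rw [div_lt_one (by linarith)]; linarith)
    rw [smul_smul, show r / (1 + r) * (1 - -r) = 0 - -r by field_simp; ring, base, zero_smul, mv_zero] at this
    exact this
  have c1 : ∀ r : ℝ, 0 < r → mv Q p (r • u) ∈ E := by
    intro r hr
    by_contra hc
    rcases lt_trichotomy r 1 with h1 | h1 | h1
    · apply hpB
      have := F2 hskew hMet hE (u := (1 - r) • u) hc (by rw [base]; exact hx1) (r / (1 - r)) (div_pos hr (by linarith))
      have h2 : 1 - r ≠ 0 := by intro h; linarith
      rw [smul_smul, show -(r / (1 - r)) * (1 - r) = 0 - r by field_simp; ring, base, zero_smul, mv_zero] at this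
      exact this
    · subst h1; exact hc (interior_subset hx1)
    · have := hE' (mv Q p ((-1 : ℝ) • u)) ((r - -1) • u) (by have := c3 1 one_pos; exact this) (by
        change mv Q _ _ ∈ _
        have e := base (-1) r
        rw [e]; exact hc) (2 / (r + 1)) (by positivity) (by rw [div_le_one (by linarith)]; linarith)
      change mv Q _ _ ∈ _ at this
      rw [smul_smul, show 2 / (r + 1) * (r - -1) = 1 - -1 by field_simp; ring, base] at this
      exact this (interior_subset hx1)
  constructor
  · rcases lt_trichotomy r 1 with h1 | h1 | h1
    · have := F1 hskew hMet hE (u := (1 - r / 2) • u) (c1 (r / 2) (by linarith)) (by rw [base]; exact hx1)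
        ((r / 2) / (1 - r / 2)) (div_pos (by linarith) (by linarith)) (by rw [div_lt_one (by linarith)]; linarith)
      have h2 : 1 - r / 2 ≠ 0 := by intro h; linarith
      have e := base (r / 2) r
      rw [show r - r / 2 = r / 2 by ring] at e
      rw [smul_smul, div_mul_cancel₀ _ h2, e] at this
      exact this
    · subst h1; exact hx1
    · have := F1 hskew hMet hE (u := (1 - 2 * r) • u) (c1 (2 * r) (by linarith)) (by rw [base]; exact hx1)
        (r / (2 * r - 1)) (div_pos (by linarith) (by linarith)) (by rw [div_lt_one (by linarith)]; linarith)
      have h2 : 2 * r - 1 ≠ 0 := by intro h; linarith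
      rw [smul_smul, show r / (2 * r - 1) * (1 - 2 * r) = r - 2 * r by
        rw [show 1 - 2 * r = -(2 * r - 1) by ring, mul_neg, div_mul_cancel₀ _ h2]; ring, base] at this
      exact this
  · have := F2 hskew hMet hE (u := (1 - -(r / 2)) • u) (c3 (r / 2) (by linarith)) (by rw [base]; exact hx1)
      ((r / 2) / (1 + r / 2)) (by positivity)
    rw [smul_smul, show -(r / 2 / (1 + r / 2)) * (1 - -(r / 2)) = -r - -(r / 2) by field_simp; ring, base] at this
    exact this

/-- The abstract version in the group. -/
structure HMG (Q : ZS m →ₗ[ℝ] ZS m →ₗ[ℝ] TS l) (A B : Set (ZS m × TS l)) : Prop where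
  oA : IsOpen A
  oB : IsOpen B
  dj : Disjoint A B
  lA : ∀ p u, p ∉ A → p ∉ B → mv Q p u ∈ A → ∀ r : ℝ, 0 < r →
      mv Q p (r • u) ∈ A ∧ mv Q p (-r • u) ∈ B
  lB : ∀ p u, p ∉ A → p ∉ B → mv Q p u ∈ B → ∀ r : ℝ, 0 < r →
      mv Q p (r • u) ∈ B ∧ mv Q p (-r • u) ∈ A

namespace HMG
variable {Q : ZS m →ₗ[ℝ] ZS m →ₗ[ℝ] TS l} {A B : Set (ZS m × TS l)}

theorem symm (h : HMG Q A B) : HMG Q B A :=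
  ⟨h.oB, h.oA, h.dj.symm, fun p u h1 h2 => h.lB p u h2 h1, fun p u h1 h2 => h.lA p u h2 h1⟩

/-- Parametrization of a coset. -/
def Phi (Q : ZS m →ₗ[ℝ] ZS m →ₗ[ℝ] TS l) (p : ZS m × TS l) (u v : ZS m) (x : ℝ × ℝ × ℝ) : ZS m × TS l :=
  (p.1 + x.1 • u + x.2.1 • v, p.2 + x.2.2 • Q u v + x.1 • Q p.1 u + x.2.1 • Q p.1 v)

theorem Phi_mv (hskew : ∀ z ζ : ZS m, Q z ζ = - Q ζ z) (p : ZS m × TS l) (u v : ZS m) (x y t a b r : ℝ) :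
    mv Q (Phi Q p u v (x, y, t)) (r • (a • u + b • v)) =
      Phi Q p u v (x + r * a, y + r * b, t + r * (x * b - y * a)) := by
  simp only [mv_eq, Phi, Prod.mk.injEq]
  constructor
  · module
  · simp only [map_add, LinearMap.add_apply, map_smul, LinearMap.smul_apply, skew_self hskew]
    rw [hskew v u]
    module

theorem pull (hskew : ∀ z ζ : ZS m, Q z ζ = - Q ζ z) (h : HMG Q A B) (p : ZS m × TS l) (u v : ZS m) :
    HM1 (Phi Q p u v ⁻¹' A) (Phi Q p u v ⁻¹' B) := by
  have hc : Continuous (Phi Q p u v) := by unfold Phi; fun_prop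
  have e1 : ∀ x y t a b : ℝ, Phi Q p u v (x + a, y + b, t + (x * b - y * a)) =
      mv Q (Phi Q p u v (x, y, t)) (a • u + b • v) := by
    intro x y t a b
    have := Phi_mv hskew p u v x y t a b 1
    simpa using this.symm
  have e2 : ∀ x y t a b r : ℝ, Phi Q p u v (x - r * a, y - r * b, t - r * (x * b - y * a)) =
      mv Q (Phi Q p u v (x, y, t)) (-r • (a • u + b • v)) := by
    intro x y t a b r
    rw [Phi_mv hskew]
    congr 1
    simp only [Prod.mk.injEq]
    refine ⟨by ring, by ring, by ring⟩
  refine ⟨h.oA.preimage hc, h.oB.preimage hc, h.dj.preimage _, ?_, ?_⟩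
  · intro x y t a b hA hB hu r hr
    rw [Set.mem_preimage, e1] at hu
    have := h.lA _ _ hA hB hu r hr
    simp only [Set.mem_preimage]
    rw [e2, ← Phi_mv hskew]
    exact this
  · intro x y t a b hA hB hu r hr
    rw [Set.mem_preimage, e1] at hu
    have := h.lB _ _ hA hB hu r hr
    simp only [Set.mem_preimage]
    rw [e2, ← Phi_mv hskew]
    exact this

theorem convexA (hskew : ∀ z ζ : ZS m, Q z ζ = - Q ζ z)
    (hMet : ∀ z : ZS m, z ≠ 0 → Function.Surjective fun ζ => Q z ζ) (e : ZS m) (he : e ≠ 0)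
    (h : HMG Q A B) : Convex ℝ A := by
  intro p hp q hq α β hα hβ hs
  have main : ∃ u v : ZS m, ∃ x0 : ℝ × ℝ × ℝ, Phi Q p u v x0 = q := by
    by_cases h0 : q.1 - p.1 = 0
    · obtain ⟨v, hv⟩ := hMet e he (q.2 - p.2)
      have hv : Q e v = _ := hv
      refine ⟨e, v, (0, 0, 1), ?_⟩
      apply Prod.ext
      · simp [Phi]; exact (sub_eq_zero.1 h0).symm
      · simp [Phi, hv]
    · obtain ⟨v, hv⟩ := hMet _ h0 (q.2 - p.2 - Q p.1 (q.1 - p.1))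
      have hv : Q (q.1 - p.1) v = _ := hv
      refine ⟨q.1 - p.1, v, (1, 0, 1), ?_⟩
      apply Prod.ext
      · simp [Phi]
      · simp only [Phi, hv]; module
  obtain ⟨u, v, x0, hx0⟩ := main
  have hz : Phi Q p u v (0, 0, 0) = p := by simp [Phi]
  have hc := (h.pull hskew p u v).convexA
  have := hc (x := (0, 0, 0)) (by rw [Set.mem_preimage, hz]; exact hp) (y := x0)
    (by rw [Set.mem_preimage, hx0]; exact hq) hα hβ hs
  rw [Set.mem_preimage] at this
  convert this using 1
  rw [← hx0]
  obtain rfl : α = 1 - β := by linarith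
  apply Prod.ext
  · simp only [Phi, Prod.fst_add, Prod.smul_fst, Prod.snd_add, Prod.smul_snd, smul_eq_mul]; module
  · simp only [Phi, Prod.fst_add, Prod.smul_fst, Prod.snd_add, Prod.smul_snd, smul_eq_mul]; module

end HMG

theorem reach {Q : ZS m →ₗ[ℝ] ZS m →ₗ[ℝ] TS l}
    (hskew : ∀ z ζ : ZS m, Q z ζ = - Q ζ z)
    (hMet : ∀ z : ZS m, z ≠ 0 → Function.Surjective fun ζ => Q z ζ) (e : ZS m) (he : e ≠ 0)
    {U : Set (ZS m × TS l)} (hU : ∀ p u, p ∈ U → mv Q p u ∈ U) {p : ZS m × TS l} (hp : p ∈ U)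
    (q : ZS m × TS l) : q ∈ U := by
  have main : ∀ p ∈ U, q.1 - p.1 ≠ 0 → q ∈ U := by
    intro p hp h0
    obtain ⟨v, hv⟩ := hMet _ h0 (-(q.2 - p.2 - Q p.1 (q.1 - p.1)))
    have hv : Q (q.1 - p.1) v = _ := hv
    have := hU _ (q.1 - p.1 - v) (hU p v hp)
    convert this using 1
    apply Prod.ext
    · simp [mv_eq]
    · have h1 := hskew v (q.1 - p.1)
      rw [hv] at h1
      simp only [mv_eq]
      rw [map_add Q p.1 v, LinearMap.add_apply, map_sub (Q v), h1, skew_self hskew, map_sub (Q p.1) _ v]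
      abel
  by_cases h0 : q.1 - p.1 = 0
  · refine main _ (hU p e hp) ?_
    simp only [mv_eq]
    rw [sub_add_eq_sub_sub, h0]; simpa using he
  · exact main p hp h0

namespace HMG
variable {Q : ZS m →ₗ[ℝ] ZS m →ₗ[ℝ] TS l} {A B : Set (ZS m × TS l)}

/-- If `A = ∅` then `S = ∅` or `S = G`. -/
theorem emptyA (hskew : ∀ z ζ : ZS m, Q z ζ = - Q ζ z)
    (hMet : ∀ z : ZS m, z ≠ 0 → Function.Surjective fun ζ => Q z ζ) (e : ZS m) (he : e ≠ 0)
    (h : HMG Q A B) (hA : A = ∅) (hB : B.Nonempty) : B = Set.univ := by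
  subst hA
  by_contra hne
  obtain ⟨p, hp⟩ := (Set.ne_univ_iff_exists_notMem _).1 hne
  obtain ⟨q, hq⟩ := hB
  have : q ∈ Bᶜ := reach hskew hMet e he (U := Bᶜ) (p := p) (fun p u hp hu =>
    (h.lB p u (by simp) hp hu 1 one_pos).2) hp q
  exact this hq

theorem twoA (hskew : ∀ z ζ : ZS m, Q z ζ = - Q ζ z) (h : HMG Q A B) {p : ZS m × TS l} {u : ZS m}
    (hA : p ∉ A) (hB : p ∉ B) {r : ℝ} (hr : 0 < r) (hA' : mv Q p (r • u) ∉ A) : mv Q p u ∉ A := by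
  intro hc
  exact hA' (h.lA p u hA hB hc r hr).1

theorem dense_AB (hskew : ∀ z ζ : ZS m, Q z ζ = - Q ζ z)
    (hMet : ∀ z : ZS m, z ≠ 0 → Function.Surjective fun ζ => Q z ζ) (e : ZS m) (he : e ≠ 0)
    (h : HMG Q A B) (hA : A.Nonempty) : interior (Sg A B) = ∅ := by
  by_contra hne
  obtain ⟨p, hp⟩ := Set.nonempty_iff_ne_empty.2 hne
  obtain ⟨q, hq⟩ := hA
  have key : q ∈ interior (Sg A B) := by
    refine reach hskew hMet e he (U := interior (Sg A B)) ?_ hp q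
    intro p u hp
    -- every point near `p` is in `S`, and so are its short horizontal moves
    have hS : ∀ p' ∈ interior (Sg A B), mv Q p' u ∈ Sg A B := by
      intro p' hp'
      have hc : Continuous fun r : ℝ => mv Q p' (r • u) :=
        (mv_cont Q).comp (f := fun r : ℝ => (p', r • u)) (by fun_prop)
      have hn : (fun r : ℝ => mv Q p' (r • u)) ⁻¹' interior (Sg A B) ∈ nhds (0 : ℝ) :=
        (isOpen_interior.preimage hc).mem_nhds (by simpa [mv_zero] using hp')
      obtain ⟨ε, hε, hb⟩ := Metric.mem_nhds_iff.1 hn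
      have hm : (ε / 2) ∈ Metric.ball (0 : ℝ) ε := by
        rw [Metric.mem_ball, dist_zero_right, Real.norm_eq_abs, abs_of_pos (by positivity)]; linarith
      have q1 := mem_Sg.1 (interior_subset (hb hm))
      have q0 := mem_Sg.1 (interior_subset hp')
      exact mem_Sg.2 ⟨h.twoA hskew q0.1 q0.2 (by positivity : 0 < ε / 2) q1.1,
        h.symm.twoA hskew q0.2 q0.1 (by positivity : 0 < ε / 2) q1.2⟩
    have hback : Continuous fun x : ZS m × TS l => mv Q x (-u) :=
      (mv_cont Q).comp (f := fun x : ZS m × TS l => (x, -u)) (by fun_prop)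
    have inv1 : ∀ x (w : ZS m), mv Q (mv Q x w) (-w) = x := by
      intro x w
      have := mv_mv hskew x w 1 (-1)
      simpa [mv_zero] using this
    rw [mem_interior]
    refine ⟨(fun x => mv Q x (-u)) ⁻¹' interior (Sg A B), ?_, isOpen_interior.preimage hback, ?_⟩
    · intro x hx
      have := hS _ hx
      have e := inv1 x (-u)
      rw [neg_neg] at e
      rwa [e] at this
    · rw [Set.mem_preimage, inv1]; exact hp
  exact (mem_Sg.1 (interior_subset key)).1 hq

end HMG

/-- One side of the final step. -/
theorem half_space_sub {A B : Set (ZS m × TS l)} (hA : IsOpen A) (cA : Convex ℝ A) (nA : A.Nonempty)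
    (hd : interior (Sg A B) = ∅) {U : Set (ZS m × TS l)} (hU : IsOpen U) (hUB : Disjoint U B) :
    U ⊆ A := by
  have h1 : U ⊆ closure A := by
    intro x hx
    by_contra hc
    have : x ∈ interior (Sg A B) := by
      rw [mem_interior]
      refine ⟨U ∩ (closure A)ᶜ, ?_, hU.inter isClosed_closure.isOpen_compl, hx, hc⟩
      rintro y ⟨hy1, hy2⟩
      exact mem_Sg.2 ⟨fun h => hy2 (subset_closure h), fun h => Set.disjoint_left.1 hUB hy1 h⟩
    rw [hd] at this
    exact this
  have h2 : U ⊆ interior (closure A) := interior_maximal h1 hU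
  rwa [cA.interior_closure_eq_interior_of_nonempty_interior (by rwa [hA.interior_eq]), hA.interior_eq] at h2

end GPart

/-- **Monotone sets in Métivier groups:** if `E` is precisely monotone and
`∂E ≠ G`, then `E` is trivial or lies between an open half-space and its closure. -/
theorem monotone_metivier_halfspace
    (m l : ℕ) (hm : 0 < m) (hl : 0 < l)
    (Q : ZS m →ₗ[ℝ] ZS m →ₗ[ℝ] TS l)
    (hskew : ∀ z ζ : ZS m, Q z ζ = - Q ζ z)
    (hMet : ∀ z : ZS m, z ≠ 0 → Function.Surjective fun ζ => Q z ζ)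
    (E : Set (ZS m × TS l)) (hE : HConvex Q E ∧ HConvex Q Eᶜ)
    (hbd : frontier E ≠ Set.univ) :
    E = ∅ ∨ E = Set.univ ∨
    ∃ ν : ZS m × TS l, ν ≠ 0 ∧ ∃ c : ℝ,
      {x : ZS m × TS l | c < (inner ℝ x.1 ν.1 : ℝ) + (inner ℝ x.2 ν.2 : ℝ)} ⊆ E ∧
      E ⊆ closure {x : ZS m × TS l | c < (inner ℝ x.1 ν.1 : ℝ) + (inner ℝ x.2 ν.2 : ℝ)} := by
  obtain ⟨hE1, hE2⟩ := hE
  obtain ⟨e, he⟩ : ∃ e : ZS m, e ≠ 0 := by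
    refine ⟨EuclideanSpace.single ⟨0, hm⟩ (1 : ℝ), ?_⟩
    simp
  have hd : Disjoint (interior E) (interior Eᶜ) :=
    (disjoint_compl_right (a := E)).mono interior_subset interior_subset
  have H : HMG Q (interior E) (interior Eᶜ) :=
    { oA := isOpen_interior
      oB := isOpen_interior
      dj := hd
      lA := fun p u h1 h2 h3 r hr => line_prop hskew hMet hE1 hE2 h1 h2 h3 r hr
      lB := fun p u h1 h2 h3 r hr => by
        have := line_prop hskew hMet (E := Eᶜ) hE2 (by rwa [compl_compl]) h2 (by rwa [compl_compl]) h3 r hr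
        rwa [compl_compl] at this }
  rcases (interior E).eq_empty_or_nonempty with hA | hA
  · rcases (interior Eᶜ).eq_empty_or_nonempty with hB | hB
    · exfalso
      apply hbd
      rw [frontier, hA, Set.sdiff_empty]
      rw [interior_compl, Set.compl_empty_iff] at hB
      exact hB
    · left
      have := H.emptyA hskew hMet e he hA hB
      have h2 : Eᶜ = Set.univ := Set.univ_subset_iff.1 (this ▸ interior_subset)
      exact Set.compl_univ_iff.1 h2
  rcases (interior Eᶜ).eq_empty_or_nonempty with hB | hB
  · right; left
    have := H.symm.emptyA hskew hMet e he hB hA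
    exact Set.univ_subset_iff.1 (this ▸ interior_subset)
  right; right
  have cA := H.convexA hskew hMet e he
  have cB := H.symm.convexA hskew hMet e he
  have hS := H.dense_AB hskew hMet e he hA
  have hS' := H.symm.dense_AB hskew hMet e he hB
  obtain ⟨f, c, hfB, hfA⟩ := geometric_hahn_banach_open_open cB H.oB cA H.oA hd.symm
  have g1 : f ⁻¹' Set.Ioi c ⊆ interior E := by
    refine half_space_sub H.oA cA hA hS (isOpen_Ioi.preimage f.continuous) ?_
    rw [Set.disjoint_left]
    intro x hx hxB
    exact lt_asymm hx (hfB x hxB)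
  have g2 : f ⁻¹' Set.Iio c ⊆ interior Eᶜ := by
    refine half_space_sub H.oB cB hB hS' (isOpen_Iio.preimage f.continuous) ?_
    rw [Set.disjoint_left]
    intro x hx hxA
    exact lt_asymm hx (hfA x hxA)
  have hf0 : f ≠ 0 := by
    rintro rfl
    obtain ⟨a, ha⟩ := hA
    obtain ⟨b, hb⟩ := hB
    have := hfA a ha
    have := hfB b hb
    simp at *
    linarith
  have hsurj : Function.Surjective f := by
    have : (f : (ZS m × TS l) →ₗ[ℝ] ℝ) ≠ 0 := by
      intro h; apply hf0; ext1 <;> ext1 x <;> simpa using LinearMap.congr_fun h _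
    exact LinearMap.surjective this
  let ν : ZS m × TS l := ((InnerProductSpace.toDual ℝ (ZS m)).symm (f.comp (ContinuousLinearMap.inl ℝ _ _)),
    (InnerProductSpace.toDual ℝ (TS l)).symm (f.comp (ContinuousLinearMap.inr ℝ _ _)))
  have hν : ∀ x : ZS m × TS l, (inner ℝ x.1 ν.1 : ℝ) + (inner ℝ x.2 ν.2 : ℝ) = f x := by
    intro x
    rw [real_inner_comm, real_inner_comm ν.2]
    simp only [ν, InnerProductSpace.toDual_symm_apply, ContinuousLinearMap.comp_apply,
      ContinuousLinearMap.inl_apply, ContinuousLinearMap.inr_apply]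
    rw [← map_add]; simp
  refine ⟨ν, ?_, c, ?_⟩
  · intro h0
    apply hf0
    have : ∀ x, f x = 0 := fun x => by rw [← hν, h0]; simp
    exact ContinuousLinearMap.ext this
  simp only [hν]
  have heq : {x : ZS m × TS l | c < f x} = f ⁻¹' Set.Ioi c := rfl
  rw [heq]
  refine ⟨g1.trans interior_subset, ?_⟩
  rw [f.closure_preimage hsurj, closure_Ioi]
  intro x hx
  by_contra hc
  exact interior_subset (g2 (show f x < c from lt_of_not_ge (fun h => hc h))) hx
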